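/- arXiv:1604.05439 — 2 statements merged into one kernel-verified Lean document; each statement's English description precedes it below -/
import Mathlib

section
/- Let E be a graph with finitely many vertices that has no transition states. Then every hereditary subset of E⁰ is saturated, and the map η ↦ ∪η is a lattice isomorphism from the hereditary subsets of Γ_E onto the saturated hereditary subsets of E⁰. -/
attribute [local instance] Classical.propDecidable

/-- A directed graph: a set of vertices, a set of edges, and source/range maps. -/
structure DirGraph : Type 1 where
  V : Type
  E : Type
  s : E → V
  r : E → V

namespace DirGraph

variable (G : DirGraph)

/-- A vertex is regular if it emits a finite nonzero number of edges. -/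
def Regular (v : G.V) : Prop :=
  {e : G.E | G.s e = v}.Finite ∧ {e : G.E | G.s e = v}.Nonempty

/-- A vertex is a sink if it emits no edges. -/
def IsSink (v : G.V) : Prop := ∀ e : G.E, G.s e ≠ v

/-- A vertex is an infinite emitter if it emits infinitely many edges. -/
def InfiniteEmitter (v : G.V) : Prop := {e : G.E | G.s e = v}.Infinite

/-- One-step reachability: there is an edge from `u` to `v`. -/
def Step (u v : G.V) : Prop := ∃ e : G.E, G.s e = u ∧ G.r e = v

/-- `Reach u v` means there is a (possibly empty) path from `u` to `v`, i.e. `u ≥ v`. -/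
def Reach : G.V → G.V → Prop := Relation.ReflTransGen G.Step

/-- A vertex supports a cycle if there is a nonempty path from it to itself. -/
def SupportsCycle (v : G.V) : Prop := Relation.TransGen G.Step v v

/-- A transition state is a regular vertex which does not support a cycle. -/
def TransitionState (v : G.V) : Prop := G.Regular v ∧ ¬ G.SupportsCycle v

/-- A set of vertices is hereditary if it is closed under reachability. -/
def Hereditary (H : Set G.V) : Prop := ∀ u v : G.V, u ∈ H → G.Reach u v → v ∈ H

/-- A set of vertices is saturated if it contains every regular vertex all of whose
emitted edges end in the set. -/
def Saturated (S : Set G.V) : Prop :=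
  ∀ v : G.V, G.Regular v → (∀ e : G.E, G.s e = v → G.r e ∈ S) → v ∈ S

/-- `H(S)`: the smallest hereditary set containing `S`. -/
def heredClosure (S : Set G.V) : Set G.V := ⋂₀ {H : Set G.V | G.Hereditary H ∧ S ⊆ H}

/-- The saturation of `S`: the smallest saturated set containing `S`. -/
def saturate (S : Set G.V) : Set G.V := ⋂₀ {T : Set G.V | G.Saturated T ∧ S ⊆ T}

/-- A nonempty set is strongly connected if any two of its vertices are joined by
a nonempty path. -/
def StronglyConn (S : Set G.V) : Prop :=
  S.Nonempty ∧ ∀ u ∈ S, ∀ v ∈ S, Relation.TransGen G.Step u v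

/-- The components of `G` (elements of `Γ_E`): maximal strongly connected subsets together
with singletons of singular vertices not supporting a cycle. -/
def IsComponent (γ : Set G.V) : Prop :=
  (G.StronglyConn γ ∧ ∀ δ : Set G.V, G.StronglyConn δ → γ ⊆ δ → δ = γ) ∨
  (∃ v : G.V, γ = {v} ∧ ¬ G.Regular v ∧ ¬ G.SupportsCycle v)

/-- The order on components: `γ ≥ δ` iff some vertex of `γ` reaches some vertex of `δ`. -/
def CompGE (γ δ : Set G.V) : Prop := ∃ u ∈ γ, ∃ w ∈ δ, G.Reach u w

/-- `η` is a hereditary set of components. -/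
def HeredComp (η : Set (Set G.V)) : Prop :=
  (∀ γ ∈ η, G.IsComponent γ) ∧
  ∀ γ δ : Set G.V, γ ∈ η → G.IsComponent δ → G.CompGE γ δ → δ ∈ η

/-- A list of edges is a path if consecutive edges are composable. -/
def IsPathChain (p : List G.E) : Prop := List.Chain' (fun e f => G.r e = G.s f) p

/-- `p` is a return path based at `v`: a nonempty path from `v` to `v` not revisiting `v`
before the final edge. -/
def IsReturnPath (v : G.V) (p : List G.E) : Prop :=
  ∃ h : p ≠ [], G.IsPathChain p ∧ G.s (p.head h) = v ∧ G.r (p.getLast h) = v ∧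
    ∀ e ∈ p.dropLast, G.r e ≠ v

/-- `v` supports (at least) two distinct return paths. -/
def TwoReturnPaths (v : G.V) : Prop :=
  ∃ p q : List G.E, G.IsReturnPath v p ∧ G.IsReturnPath v q ∧ p ≠ q

/-- `v` supports a unique return path. -/
def UniqueReturnPath (v : G.V) : Prop := ∃! p : List G.E, G.IsReturnPath v p

/-- A component is cyclic if each of its vertices supports exactly one return path. -/
def CyclicComponent (γ : Set G.V) : Prop :=
  G.IsComponent γ ∧ ∀ v ∈ γ, G.UniqueReturnPath v

/-- Condition (K): every vertex supports either no return path or at least two. -/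
def ConditionK : Prop :=
  ∀ v : G.V, (¬ ∃ p : List G.E, G.IsReturnPath v p) ∨ G.TwoReturnPaths v

/-- The cycle (or path) `p` has an exit. -/
def HasExit (p : List G.E) : Prop := ∃ f e : G.E, e ∈ p ∧ G.s f = G.s e ∧ f ≠ e

/-- `p` is a nonempty path from `v` to `w`. -/
def IsPathFromTo (v w : G.V) (p : List G.E) : Prop :=
  ∃ h : p ≠ [], G.IsPathChain p ∧ G.s (p.head h) = v ∧ G.r (p.getLast h) = w

/-- Condition (H). -/
def ConditionH : Prop :=
  ∀ v : G.V, G.Regular v → G.UniqueReturnPath v →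
    (∀ p : List G.E, G.IsReturnPath v p → ¬ G.HasExit p) ∨
    ∃ w : G.V, w ≠ v ∧ (¬ G.Regular w ∨ G.UniqueReturnPath w) ∧
      (∃ p : List G.E, G.IsPathFromTo v w p) ∧
      ∀ p : List G.E, G.IsPathFromTo v w p → ∀ e ∈ p,
        ¬ G.TwoReturnPaths (G.s e) ∧ ¬ G.TwoReturnPaths (G.r e)

/-- The temperature `τ_E(γ) = sgn(|γ¹| − |γ|)` of a set of vertices, with the conventions
`sgn(0) = 0` and `sgn(∞) = 1`. -/
noncomputable def temp (γ : Set G.V) : ℤ :=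
  if {e : G.E | G.s e ∈ γ ∧ G.r e ∈ γ}.Infinite then 1
  else Int.sign ((Nat.card {e : G.E | G.s e ∈ γ ∧ G.r e ∈ γ} : ℤ) - (Nat.card γ : ℤ))

end DirGraph

namespace DirGraph

variable {G : DirGraph}

/-- A hereditary set is saturated when every regular vertex supports a cycle. -/
theorem Hereditary.saturated (hnt : ∀ v : G.V, ¬ G.TransitionState v) {H : Set G.V}
    (hH : G.Hereditary H) : G.Saturated H := by
  intro v hv hout
  have hcyc : G.SupportsCycle v := by
    by_contra hc
    exact hnt v ⟨hv, hc⟩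
  obtain ⟨w, ⟨e, hs, rfl⟩, hwv⟩ := Relation.TransGen.head'_iff.mp hcyc
  exact hH _ _ (hout e hs) hwv

/-- Without transition states, the components cover the vertex set. -/
theorem exists_isComponent_mem (hnt : ∀ v : G.V, ¬ G.TransitionState v) (v : G.V) :
    ∃ γ : Set G.V, G.IsComponent γ ∧ v ∈ γ := by
  by_cases hc : G.SupportsCycle v
  · refine ⟨{w | Relation.TransGen G.Step v w ∧ Relation.TransGen G.Step w v},
      Or.inl ⟨⟨⟨v, hc, hc⟩, fun u hu w hw => hu.2.trans hw.1⟩, ?_⟩, hc, hc⟩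
    intro δ hδ hsub
    exact Set.Subset.antisymm
      (fun w hw => ⟨hδ.2 v (hsub ⟨hc, hc⟩) w hw, hδ.2 w hw v (hsub ⟨hc, hc⟩)⟩) hsub
  · exact ⟨{v}, Or.inr ⟨v, rfl, fun hr => hnt v ⟨hr, hc⟩, hc⟩, rfl⟩

theorem IsComponent.nonempty {γ : Set G.V} (hγ : G.IsComponent γ) : γ.Nonempty := by
  rcases hγ with ⟨h, -⟩ | ⟨v, rfl, -⟩
  · exact h.1
  · exact Set.singleton_nonempty v

theorem IsComponent.reach {γ : Set G.V} (hγ : G.IsComponent γ) {u v : G.V} (hu : u ∈ γ)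
    (hv : v ∈ γ) : G.Reach u v := by
  rcases hγ with ⟨h, -⟩ | ⟨w, rfl, -⟩
  · exact (h.2 u hu v hv).to_reflTransGen
  · obtain rfl : u = w := hu
    obtain rfl : v = u := hv
    exact Relation.ReflTransGen.refl

theorem StronglyConn.union {γ δ : Set G.V} (hγ : G.StronglyConn γ) (hδ : G.StronglyConn δ)
    {v : G.V} (hvγ : v ∈ γ) (hvδ : v ∈ δ) : G.StronglyConn (γ ∪ δ) := by
  refine ⟨⟨v, Or.inl hvγ⟩, fun a ha b hb => ?_⟩
  have hav : Relation.TransGen G.Step a v :=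
    ha.elim (fun h => hγ.2 a h v hvγ) (fun h => hδ.2 a h v hvδ)
  have hvb : Relation.TransGen G.Step v b :=
    hb.elim (fun h => hγ.2 v hvγ b h) (fun h => hδ.2 v hvδ b h)
  exact hav.trans hvb

/-- Distinct components are disjoint. -/
theorem IsComponent.eq_of_mem {γ δ : Set G.V} (hγ : G.IsComponent γ) (hδ : G.IsComponent δ)
    {v : G.V} (hvγ : v ∈ γ) (hvδ : v ∈ δ) : γ = δ := by
  rcases hγ with ⟨hγ, hγmax⟩ | ⟨a, rfl, -, ha⟩ <;> rcases hδ with ⟨hδ, hδmax⟩ | ⟨b, rfl, -, hb⟩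
  · have hu := hγ.union hδ hvγ hvδ
    rw [← hγmax _ hu Set.subset_union_left]
    exact hδmax _ hu Set.subset_union_right
  · obtain rfl : v = b := hvδ
    exact absurd (hγ.2 v hvγ v hvγ) hb
  · obtain rfl : v = a := hvγ
    exact absurd (hδ.2 v hvδ v hvδ) ha
  · obtain rfl : v = a := hvγ
    obtain rfl : v = b := hvδ
    rfl

theorem HeredComp.hereditary_sUnion (hnt : ∀ v : G.V, ¬ G.TransitionState v)
    {η : Set (Set G.V)} (hη : G.HeredComp η) : G.Hereditary (⋃₀ η) := by
  rintro u v ⟨γ, hγ, hu⟩ huv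
  obtain ⟨δ, hδ, hv⟩ := exists_isComponent_mem hnt v
  exact ⟨δ, hη.2 γ δ hγ hδ ⟨u, hu, v, hv, huv⟩, hv⟩

theorem HeredComp.subset_iff_sUnion_subset {η₁ η₂ : Set (Set G.V)} (h₁ : G.HeredComp η₁)
    (h₂ : G.HeredComp η₂) : η₁ ⊆ η₂ ↔ ⋃₀ η₁ ⊆ ⋃₀ η₂ := by
  refine ⟨Set.sUnion_subset_sUnion, fun h γ hγ => ?_⟩
  obtain ⟨v, hv⟩ := (h₁.1 γ hγ).nonempty
  obtain ⟨δ, hδ, hvδ⟩ := h ⟨γ, hγ, hv⟩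
  rwa [(h₁.1 γ hγ).eq_of_mem (h₂.1 δ hδ) hv hvδ]

/-- The components contained in a hereditary set form a hereditary set of components. -/
theorem Hereditary.heredComp {H : Set G.V} (hH : G.Hereditary H) :
    G.HeredComp {γ | G.IsComponent γ ∧ γ ⊆ H} := by
  refine ⟨fun γ hγ => hγ.1, ?_⟩
  rintro γ δ ⟨-, hγH⟩ hδ ⟨u, hu, w, hw, huw⟩
  exact ⟨hδ, fun x hx => hH u x (hγH hu) (huw.trans (hδ.reach hw hx))⟩

/-- Without transition states, a hereditary set is the union of the components it contains. -/
theorem Hereditary.sUnion_components (hnt : ∀ v : G.V, ¬ G.TransitionState v) {H : Set G.V}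
    (hH : G.Hereditary H) : ⋃₀ {γ | G.IsComponent γ ∧ γ ⊆ H} = H := by
  refine Set.Subset.antisymm (Set.sUnion_subset fun γ hγ => hγ.2) fun v hv => ?_
  obtain ⟨γ, hγ, hvγ⟩ := exists_isComponent_mem hnt v
  exact ⟨γ, ⟨hγ, fun x hx => hH v x hv (hγ.reach hvγ hx)⟩, hvγ⟩

end DirGraph

open DirGraph in
/-- Corollary `cor:structure-a`: if `G` has finitely many vertices and no
transition states, then every hereditary subset of `E⁰` is saturated and `η ↦ ∪η` is a
lattice (order) isomorphism from the hereditary subsets of `Γ_E` onto the saturated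
hereditary subsets of `E⁰`. -/
theorem stmt2 (G : DirGraph) (hcE : Countable G.E) (hfin : Finite G.V)
    (hnt : ∀ v : G.V, ¬ G.TransitionState v) :
    (∀ H : Set G.V, G.Hereditary H → G.Saturated H) ∧
    (∀ η₁ η₂ : Set (Set G.V), G.HeredComp η₁ → G.HeredComp η₂ →
      (η₁ ⊆ η₂ ↔ ⋃₀ η₁ ⊆ ⋃₀ η₂)) ∧
    (∀ η : Set (Set G.V), G.HeredComp η →
      G.Hereditary (⋃₀ η) ∧ G.Saturated (⋃₀ η)) ∧
    (∀ H : Set G.V, G.Hereditary H → G.Saturated H →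
      ∃! η : Set (Set G.V), G.HeredComp η ∧ ⋃₀ η = H) := by
  refine ⟨fun H hH => hH.saturated hnt, fun η₁ η₂ h₁ h₂ => h₁.subset_iff_sUnion_subset h₂,
    fun η hη => ⟨hη.hereditary_sUnion hnt, (hη.hereditary_sUnion hnt).saturated hnt⟩, ?_⟩
  intro H hH _
  refine ⟨{γ | G.IsComponent γ ∧ γ ⊆ H}, ⟨hH.heredComp, hH.sUnion_components hnt⟩, ?_⟩
  rintro η ⟨hη, hηH⟩
  have heq : ⋃₀ η = ⋃₀ {γ | G.IsComponent γ ∧ γ ⊆ H} :=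
    hηH.trans (hH.sUnion_components hnt).symm
  exact Set.Subset.antisymm ((hη.subset_iff_sUnion_subset hH.heredComp).mpr heq.subset)
    ((hH.heredComp.subset_iff_sUnion_subset hη).mpr heq.symm.subset)
end

section
/- Let E be a graph with finitely many vertices and let γ ∈ Γ_E be a component of E. Then the saturation of H(γ) \ γ is the largest proper saturated hereditary subset of the saturation of H(γ): it is saturated, hereditary, properly contained in the saturation of H(γ), and it contains every saturated hereditary set that is properly contained in the saturation of H(γ). -/
attribute [local instance] Classical.propDecidable

namespace DirGraph

variable {G : DirGraph}

theorem subset_heredClosure (S : Set G.V) : S ⊆ G.heredClosure S :=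
  Set.subset_sInter fun _ hH => hH.2

theorem heredClosure_subset {S H : Set G.V} (hH : G.Hereditary H) (hS : S ⊆ H) :
    G.heredClosure S ⊆ H :=
  Set.sInter_subset_of_mem ⟨hH, hS⟩

theorem hereditary_heredClosure (S : Set G.V) : G.Hereditary (G.heredClosure S) :=
  fun u v hu huv H hH => hH.1 u v (hu H hH) huv

theorem exists_reach_of_mem_heredClosure {S : Set G.V} {w : G.V} (hw : w ∈ G.heredClosure S) :
    ∃ u ∈ S, G.Reach u w := by
  refine heredClosure_subset (H := {w | ∃ u ∈ S, G.Reach u w}) ?_ ?_ hw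
  · rintro v w ⟨u, hu, huv⟩ hvw
    exact ⟨u, hu, huv.trans hvw⟩
  · exact fun u hu => ⟨u, hu, Relation.ReflTransGen.refl⟩

theorem subset_saturate (S : Set G.V) : S ⊆ G.saturate S :=
  Set.subset_sInter fun _ hT => hT.2

theorem saturate_subset {S T : Set G.V} (hT : G.Saturated T) (hS : S ⊆ T) :
    G.saturate S ⊆ T :=
  Set.sInter_subset_of_mem ⟨hT, hS⟩

theorem saturated_saturate (S : Set G.V) : G.Saturated (G.saturate S) :=
  fun v hv h T hT => hT.1 v hv fun e he => h e he T hT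

theorem saturate_mono {S T : Set G.V} (h : S ⊆ T) : G.saturate S ⊆ G.saturate T :=
  saturate_subset (saturated_saturate T) (h.trans (subset_saturate T))

/-- The saturation of a hereditary set is hereditary. -/
theorem Hereditary.saturate {S : Set G.V} (hS : G.Hereditary S) :
    G.Hereditary (G.saturate S) := by
  have key : G.saturate S ⊆ {v | ∀ w, G.Reach v w → w ∈ G.saturate S} := by
    refine saturate_subset ?_ fun v hv w hvw => subset_saturate S (hS v w hv hvw)
    intro v hv h w hvw
    rcases Relation.ReflTransGen.cases_head hvw with rfl | ⟨x, ⟨e, he, rfl⟩, hxw⟩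
    · exact saturated_saturate S v hv fun e he => h e he _ Relation.ReflTransGen.refl
    · exact h e he w hxw
  exact fun u v hu huv => key hu v huv

namespace IsComponent

variable {γ : Set G.V}

theorem nonempty_s4 (hγ : G.IsComponent γ) : γ.Nonempty := by
  rcases hγ with ⟨h, -⟩ | ⟨v, rfl, -⟩
  · exact h.1
  · exact Set.singleton_nonempty v

theorem reach_s4 (hγ : G.IsComponent γ) {u v : G.V} (hu : u ∈ γ) (hv : v ∈ γ) :
    G.Reach u v := by
  rcases hγ with ⟨h, -⟩ | ⟨x, rfl, -⟩
  · exact (h.2 u hu v hv).to_reflTransGen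
  · obtain rfl : u = x := hu
    obtain rfl : v = u := hv
    exact Relation.ReflTransGen.refl

/-- A vertex lying on a round trip from a vertex of a component belongs to the component. -/
theorem mem_of_reach (hγ : G.IsComponent γ) {u w : G.V} (hu : u ∈ γ)
    (huw : G.Reach u w) (hwu : G.Reach w u) : w ∈ γ := by
  rcases hγ with ⟨h, hmax⟩ | ⟨x, rfl, -, hx⟩
  · have from_u : ∀ b ∈ insert w γ, G.Reach u b := by
      rintro b (rfl | hb)
      exacts [huw, (h.2 u hu b hb).to_reflTransGen]
    have to_u : ∀ a ∈ insert w γ, G.Reach a u := by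
      rintro a (rfl | ha)
      exacts [hwu, (h.2 a ha u hu).to_reflTransGen]
    have hconn : G.StronglyConn (insert w γ) :=
      ⟨Set.insert_nonempty w γ, fun a ha b hb =>
        (Relation.TransGen.trans_right (to_u a ha) (h.2 u hu u hu)).trans_left (from_u b hb)⟩
    rw [← hmax _ hconn (Set.subset_insert w γ)]
    exact Set.mem_insert w γ
  · obtain rfl : u = x := hu
    rcases Relation.reflTransGen_iff_eq_or_transGen.1 huw with rfl | huw
    · rfl
    · exact absurd (huw.trans_left hwu) hx

/-- A regular vertex of a component emits an edge into the component. -/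
theorem exists_edge (hγ : G.IsComponent γ) {v : G.V} (hv : v ∈ γ) (hreg : G.Regular v) :
    ∃ e, G.s e = v ∧ G.r e ∈ γ := by
  have hcyc : G.SupportsCycle v := by
    rcases hγ with ⟨h, -⟩ | ⟨x, rfl, hx, -⟩
    · exact h.2 v hv v hv
    · obtain rfl : v = x := hv
      exact absurd hreg hx
  obtain ⟨w, ⟨e, he, rfl⟩, hwv⟩ := Relation.TransGen.head'_iff.1 hcyc
  exact ⟨e, he, hγ.mem_of_reach hv (Relation.ReflTransGen.single ⟨e, he, rfl⟩) hwv⟩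

theorem saturated_compl (hγ : G.IsComponent γ) : G.Saturated γᶜ := by
  intro v hreg h hv
  obtain ⟨e, he, hmem⟩ := hγ.exists_edge hv hreg
  exact h e he hmem

theorem hereditary_heredClosure_diff (hγ : G.IsComponent γ) :
    G.Hereditary (G.heredClosure γ \ γ) := by
  rintro w x ⟨hw, hwγ⟩ hwx
  refine ⟨hereditary_heredClosure γ w x hw hwx, fun hx => hwγ ?_⟩
  obtain ⟨u, hu, huw⟩ := exists_reach_of_mem_heredClosure hw
  exact hγ.mem_of_reach hu huw (hwx.trans (hγ.reach_s4 hx hu))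

/-- A hereditary set meeting a component contains everything below the component. -/
theorem heredClosure_subset_of_mem (hγ : G.IsComponent γ) {M : Set G.V}
    (hM : G.Hereditary M) {v : G.V} (hvγ : v ∈ γ) (hvM : v ∈ M) : G.heredClosure γ ⊆ M :=
  heredClosure_subset hM fun w hw => hM v w hvM (hγ.reach_s4 hvγ hw)

end IsComponent

end DirGraph

open DirGraph in
/-- Lemma `lem:structure-2(ii)`: for a component `γ` of a graph with
finitely many vertices, the saturation of `H(γ) \ γ` is the largest proper saturated
hereditary subset of the saturation of `H(γ)`. -/
theorem stmt4 (G : DirGraph) (hcE : Countable G.E) (hfin : Finite G.V)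
    (γ : Set G.V) (hγ : G.IsComponent γ) :
    G.Saturated (G.saturate (G.heredClosure γ \ γ)) ∧
    G.Hereditary (G.saturate (G.heredClosure γ \ γ)) ∧
    G.saturate (G.heredClosure γ \ γ) ⊆ G.saturate (G.heredClosure γ) ∧
    G.saturate (G.heredClosure γ \ γ) ≠ G.saturate (G.heredClosure γ) ∧
    (∀ M : Set G.V, G.Saturated M → G.Hereditary M →
      M ⊆ G.saturate (G.heredClosure γ) → M ≠ G.saturate (G.heredClosure γ) →
      M ⊆ G.saturate (G.heredClosure γ \ γ)) := by
  refine ⟨saturated_saturate _, hγ.hereditary_heredClosure_diff.saturate,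
    saturate_mono Set.sdiff_subset, fun heq => ?_, fun M hMs hMh hMsub hMne => ?_⟩
  · obtain ⟨v, hv⟩ := hγ.nonempty_s4
    have hmem : v ∈ G.saturate (G.heredClosure γ \ γ) :=
      heq ▸ subset_saturate _ (subset_heredClosure γ hv)
    exact saturate_subset hγ.saturated_compl (fun _ hx => hx.2) hmem hv
  · have hdisj : ∀ v ∈ M, v ∉ γ := fun v hvM hvγ => hMne <|
      hMsub.antisymm (saturate_subset hMs (hγ.heredClosure_subset_of_mem hMh hvγ hvM))
    have key : G.saturate (G.heredClosure γ) ⊆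
        {v | v ∈ M → v ∈ G.saturate (G.heredClosure γ \ γ)} := by
      refine saturate_subset (fun v hreg h hvM => ?_)
        fun v hv hvM => subset_saturate _ ⟨hv, hdisj v hvM⟩
      exact saturated_saturate _ v hreg fun e he =>
        h e he (hMh v _ hvM (Relation.ReflTransGen.single ⟨e, he, rfl⟩))
    exact fun v hv => key (hMsub hv) hv
end
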